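/- Closing singleton views under congruence (Lemma 'ssd-rewriting-cc'): Let A be an NFA over β with finitely many states, let L_s be a language over α ⊕ β, and let V : α → Language β be views capturing ⟨L_s, L(A)⟩ such that each V(a) is either empty or a singleton {w^a}. Define V' : α → Language β by V'(a) = [w^a]_A if V(a) = {w^a}, and V'(a) = ∅ if V(a) = ∅. Then V' captures ⟨L_s, L(A)⟩. -/

import Mathlib

/-!
Two words with the same transition relation lead from any set of states to the same set of
states, so congruence is compatible with concatenation. Every word obtained by substituting the
closed views `V'` into `s` is therefore congruent to a word obtained by substituting `V` into the
same `s` (`exists_congr_mem_subst`), and acceptance depends only on the congruence class. In the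
other direction every word lies in its own class, so `V ≤ V'` and hence `L_s[V] ⊆ L_s[V']`, which
gives non-emptiness.
-/

/-- Substituted letter: a source letter is replaced by its view, a target letter by itself. -/
def viewHat {α β : Type*} (V : α → Language β) : α ⊕ β → Language β
  | Sum.inl a => V a
  | Sum.inr b => {[b]}

/-- Substitution `s[V]` of views into a word over the combined alphabet. -/
def subst {α β : Type*} (V : α → Language β) (s : List (α ⊕ β)) : Language β :=
  (s.map (viewHat V)).prod

/-- Substitution `L_s[V]` of views into a source language. -/
def langSubst {α β : Type*} (V : α → Language β) (Ls : Language (α ⊕ β)) : Language β :=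
  ⋃ s ∈ Ls, subst V s

/-- Views `V` capture the mapping `⟨L_s, L_t⟩`. -/
def Captures {α β : Type*} (V : α → Language β) (Ls : Language (α ⊕ β))
    (Lt : Language β) : Prop :=
  langSubst V Ls ≤ Lt ∧ langSubst V Ls ≠ 0

/-- The transition relation of the word `w` on the NFA `A`. -/
def transRel {β σ : Type*} (A : NFA β σ) (w : List β) : Set (σ × σ) :=
  {pq | pq.2 ∈ A.evalFrom {pq.1} w}

/-- The congruence class of the word `w` for the NFA `A`. -/
def congClass {β σ : Type*} (A : NFA β σ) (w : List β) : Language β :=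
  {w' | transRel A w' = transRel A w}

theorem evalFrom_eq_of_transRel_eq {β σ : Type*} {A : NFA β σ} {u v : List β}
    (h : transRel A u = transRel A v) (S : Set σ) : A.evalFrom S u = A.evalFrom S v := by
  rw [A.evalFrom_eq_biUnion_singleton S u, A.evalFrom_eq_biUnion_singleton S v]
  have key : ∀ p, A.evalFrom {p} u = A.evalFrom {p} v := fun p =>
    Set.ext fun q => Set.ext_iff.mp h (p, q)
  simp only [key]

theorem transRel_append_congr {β σ : Type*} {A : NFA β σ} {u u' v v' : List β}
    (hu : transRel A u = transRel A u') (hv : transRel A v = transRel A v') :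
    transRel A (u ++ v) = transRel A (u' ++ v') := by
  ext ⟨p, q⟩
  simp only [transRel, Set.mem_ofPred_eq, NFA.evalFrom_append]
  rw [evalFrom_eq_of_transRel_eq hu, evalFrom_eq_of_transRel_eq hv]

theorem mem_langSubst {α β : Type*} {V : α → Language β} {Ls : Language (α ⊕ β)} {w : List β} :
    w ∈ langSubst V Ls ↔ ∃ s ∈ Ls, w ∈ subst V s := by
  refine (Set.mem_iUnion₂ (s := fun s (_ : s ∈ Ls) => subst V s)).trans ?_
  exact ⟨fun ⟨s, hs, h⟩ => ⟨s, hs, h⟩, fun ⟨s, hs, h⟩ => ⟨s, hs, h⟩⟩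

theorem subst_cons {α β : Type*} (V : α → Language β) (c : α ⊕ β) (s : List (α ⊕ β)) :
    subst V (c :: s) = viewHat V c * subst V s := by
  simp [subst]

theorem subst_mono {α β : Type*} {V V' : α → Language β} (h : ∀ a, V a ≤ V' a)
    (s : List (α ⊕ β)) : subst V s ≤ subst V' s := by
  induction s with
  | nil => exact le_rfl
  | cons c s ih =>
    rw [subst_cons, subst_cons]
    refine mul_le_mul' ?_ ih
    cases c with
    | inl a => exact h a
    | inr b => exact le_rfl

/-- If every word of each `V' a` is congruent to some word of `V a`, the same holds for the
substitutions of `V'` and `V` into any word. -/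
theorem exists_congr_mem_subst {α β σ : Type*} {A : NFA β σ} {V V' : α → Language β}
    (h : ∀ a, ∀ w' ∈ V' a, ∃ w ∈ V a, transRel A w' = transRel A w)
    (s : List (α ⊕ β)) :
    ∀ w' ∈ subst V' s, ∃ w ∈ subst V s, transRel A w' = transRel A w := by
  induction s with
  | nil => exact fun w' hw' => ⟨w', hw', rfl⟩
  | cons c s ih =>
    intro w' hw'
    rw [subst_cons, Language.mem_mul] at hw'
    obtain ⟨u', hu', v', hv', rfl⟩ := hw'
    obtain ⟨v, hv, hvv⟩ := ih v' hv'
    have hc : ∃ u ∈ viewHat V c, transRel A u' = transRel A u := by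
      cases c with
      | inl a => exact h a u' hu'
      | inr b => exact ⟨u', hu', rfl⟩
    obtain ⟨u, hu, huu⟩ := hc
    refine ⟨u ++ v, ?_, transRel_append_congr huu hvv⟩
    rw [subst_cons]
    exact Language.append_mem_mul hu hv

/-- Lemma "ssd-rewriting-cc": let `A` be an NFA with finitely many states and let `V` be
singleton views (each view empty or a single word) capturing `⟨L_s, L(A)⟩`.  Then the
views `V'` obtained by replacing each single word by its congruence class for `A`
(and keeping empty views empty) also capture `⟨L_s, L(A)⟩`. -/
theorem ssd_rewriting_cc {α β σ : Type*} [Fintype σ] (A : NFA β σ)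
    (Ls : Language (α ⊕ β)) (V V' : α → Language β)
    (hV : Captures V Ls A.accepts)
    (hsing : ∀ a : α, V a = 0 ∨ ∃ w : List β, V a = {w})
    (hV' : ∀ a : α, (V a = 0 → V' a = 0) ∧
      ∀ w : List β, V a = {w} → V' a = congClass A w) :
    Captures V' Ls A.accepts := by
  have hle : ∀ a, V a ≤ V' a := by
    intro a
    rcases hsing a with h0 | ⟨w, hw⟩
    · rw [h0]
      exact bot_le
    · rw [hw, (hV' a).2 w hw]
      rintro x rfl
      exact rfl
  have hcongr : ∀ a, ∀ w' ∈ V' a, ∃ w ∈ V a, transRel A w' = transRel A w := by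
    intro a w' hw'
    rcases hsing a with h0 | ⟨w, hw⟩
    · rw [(hV' a).1 h0] at hw'
      exact absurd hw' (Language.notMem_zero w')
    · rw [(hV' a).2 w hw] at hw'
      exact ⟨w, hw ▸ Set.mem_singleton w, hw'⟩
  refine ⟨fun w' hw' => ?_, fun h0 => hV.2 ?_⟩
  · obtain ⟨s, hs, hw's⟩ := mem_langSubst.mp hw'
    obtain ⟨w, hw, hww⟩ := exists_congr_mem_subst hcongr s w' hw's
    have hacc : w ∈ A.accepts := hV.1 (mem_langSubst.mpr ⟨s, hs, hw⟩)
    change w' ∈ A.accepts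
    rw [NFA.mem_accepts] at hacc ⊢
    rwa [evalFrom_eq_of_transRel_eq hww]
  · refine le_bot_iff.mp fun w hw => ?_
    obtain ⟨s, hs, hws⟩ := mem_langSubst.mp hw
    have hmem : w ∈ langSubst V' Ls := mem_langSubst.mpr ⟨s, hs, subst_mono hle s hws⟩
    rw [h0] at hmem
    exact absurd hmem (Language.notMem_zero w)
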